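/- arXiv:2104.11053 — 4 statements merged into one kernel-verified Lean document; each statement's English description precedes it below -/
import Mathlib

section
/- Let V' = ℝ² with standard orthonormal basis e₁,e₂ and standard inner product h. Let P be a linear map on V' with P² = id, tr P = 0 and h(Px,Py) = h(x,y) for all x,y. Let F' : V'×V'×V' → ℝ be a trilinear form satisfying F'(x,y,z) = F'(x,z,y) and F'(x,Py,z) = −F'(x,y,Pz) for all x,y,z. Define θ'(z) = Σ_{i=1}^{2} F'(e_i,e_i,z) and θ'*(z) = −θ'(Pz). Then F'(x,y,z) = (1/2)[h(x,y)θ'(z) + h(x,z)θ'(y) + h(x,Py)θ'*(z) + h(x,Pz)θ'*(y)] for all x,y,z (i.e. every 2-dimensional almost paracomplex Riemannian manifold is a W₁-manifold). -/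
noncomputable section

/-- `V' = ℝ²` with standard basis and inner product. -/
abbrev V2 : Type := Fin 2 → ℝ

/-- The standard basis `e₁, e₂` of `V2`. -/
def e2 (i : Fin 2) : V2 := Pi.single i 1

/-- The standard inner product `h` on `V2`. -/
def g2 (x y : V2) : ℝ := ∑ i, x i * y i

/-- A map `F : V'×V'×V' → ℝ` is trilinear. -/
def IsTrilinear2 (F : V2 → V2 → V2 → ℝ) : Prop :=
  (∀ (c : ℝ) (x x' y z : V2), F (c • x + x') y z = c * F x y z + F x' y z) ∧
  (∀ (c : ℝ) (x y y' z : V2), F x (c • y + y') z = c * F x y z + F x y' z) ∧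
  (∀ (c : ℝ) (x y z z' : V2), F x y (c • z + z') = c * F x y z + F x y z')

/-- A trilinear form on `V2` is determined by its components in the standard basis. -/
lemma IsTrilinear2.eq_sum {F : V2 → V2 → V2 → ℝ} (hF : IsTrilinear2 F) (x y z : V2) :
    F x y z = ∑ i, ∑ j, ∑ k, x i * y j * z k * F (e2 i) (e2 j) (e2 k) := by
  obtain ⟨h₁, h₂, h₃⟩ := hF
  have hdecomp : ∀ v : V2, v = v 0 • e2 0 + (v 1 • e2 1 + 0) := by
    intro v
    ext i
    fin_cases i <;> simp [e2]
  have hz₁ : ∀ y z, F 0 y z = 0 := fun y z ↦ by simpa using h₁ 1 0 0 y z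
  have hz₂ : ∀ x z, F x 0 z = 0 := fun x z ↦ by simpa using h₂ 1 x 0 0 z
  have hz₃ : ∀ x y, F x y 0 = 0 := fun x y ↦ by simpa using h₃ 1 x y 0 0
  conv_lhs => rw [hdecomp x, hdecomp y, hdecomp z]
  simp only [h₁, h₂, h₃, hz₁, hz₂, hz₃, Fin.sum_univ_two]
  ring

/-- A symmetric bilinear form `!![p, q; q, r]` for which the reflection `!![a, b; b, -a]` is
skew is a multiple of `!![b, -a; -a, -b]`. -/
lemma exists_eq_mul_of_skew_reflection {a b p q r : ℝ} (hab : a ^ 2 + b ^ 2 = 1)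
    (h₁ : a * p + b * q = 0) (h₂ : b * q - a * r = 0) (h₃ : b * (p + r) = 0) :
    ∃ m, p = m * b ∧ q = -(m * a) ∧ r = -(m * b) :=
  ⟨b * p - a * q, by linear_combination (-p) * hab + a * h₁,
    by linear_combination (-q) * hab + b * h₁,
    by linear_combination (-r) * hab - a * h₂ + b * h₃⟩

/-- Every 2-dimensional almost paracomplex Riemannian manifold is a `W₁`-manifold:
if `P` is an almost paracomplex structure on `(ℝ², h)` compatible with `h`, and `F'` is a
trilinear form with the symmetries of the fundamental tensor, then `F'` is expressed through
its Lee form `θ'` by the `W₁`-formula. -/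
theorem statement0 (P : V2 →ₗ[ℝ] V2)
    (hP2 : ∀ x, P (P x) = x)
    (hPtr : LinearMap.trace ℝ V2 P = 0)
    (hPg : ∀ x y, g2 (P x) (P y) = g2 x y)
    (F' : V2 → V2 → V2 → ℝ)
    (hlin : IsTrilinear2 F')
    (hsym : ∀ x y z, F' x y z = F' x z y)
    (hPF : ∀ x y z, F' x (P y) z = - F' x y (P z))
    (θ' : V2 → ℝ) (hθ' : ∀ z, θ' z = ∑ i, F' (e2 i) (e2 i) z)
    (θ's : V2 → ℝ) (hθ's : ∀ z, θ's z = - θ' (P z)) :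
    ∀ x y z, F' x y z =
      (1 / 2) * (g2 x y * θ' z + g2 x z * θ' y + g2 x (P y) * θ's z + g2 x (P z) * θ's y) := by
  obtain ⟨a, b, hab, hP0, hP1⟩ : ∃ a b : ℝ, a ^ 2 + b ^ 2 = 1 ∧
      (∀ v, P v 0 = a * v 0 + b * v 1) ∧ (∀ v, P v 1 = b * v 0 - a * v 1) := by
    have hv : ∀ v i, P v i = P (e2 0) i * v 0 + P (e2 1) i * v 1 := by
      intro v i
      have hdecomp : v = v 0 • e2 0 + v 1 • e2 1 := by
        ext i
        fin_cases i <;> simp [e2]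
      conv_lhs => rw [hdecomp, map_add, map_smul, map_smul]
      simp only [Pi.add_apply, Pi.smul_apply, smul_eq_mul]
      ring
    have htr : P (e2 0) 0 + P (e2 1) 1 = 0 := by
      rw [LinearMap.trace_eq_matrix_trace ℝ (Pi.basisFun ℝ (Fin 2)), Matrix.trace_fin_two] at hPtr
      simpa [LinearMap.toMatrix_apply, e2] using hPtr
    have hself : P (e2 0) 1 = P (e2 1) 0 := by
      have h := hPg (e2 0) (P (e2 1))
      rw [hP2] at h
      simpa [g2, e2, Fin.sum_univ_two] using h
    have hnorm : P (e2 0) 0 ^ 2 + P (e2 0) 1 ^ 2 = 1 := by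
      have h := hPg (e2 0) (e2 0)
      simpa [g2, e2, Fin.sum_univ_two, sq] using h
    refine ⟨P (e2 0) 0, P (e2 0) 1, hnorm, fun v ↦ ?_, fun v ↦ ?_⟩
    · rw [hv v 0, hself]
    · rw [hv v 1]
      linear_combination v 1 * htr
  have hm : ∀ i, ∃ m, F' (e2 i) (e2 0) (e2 0) = m * b ∧ F' (e2 i) (e2 0) (e2 1) = -(m * a) ∧
      F' (e2 i) (e2 1) (e2 1) = -(m * b) := by
    intro i
    have hs := hsym (e2 i) (e2 1) (e2 0)
    have hPe0 : P (e2 0) = a • e2 0 + b • e2 1 := by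
      ext i
      fin_cases i <;> simp [hP0, hP1, e2]
    have hPe1 : P (e2 1) = b • e2 0 + (-a) • e2 1 := by
      ext i
      fin_cases i <;> simp [hP0, hP1, e2]
    have hz₂ : ∀ x z, F' x 0 z = 0 := fun x z ↦ by simpa using hlin.2.1 1 x 0 0 z
    have hz₃ : ∀ x y, F' x y 0 = 0 := fun x y ↦ by simpa using hlin.2.2 1 x y 0 0
    have hc₂ : ∀ (c : ℝ) x y z, F' x (c • y) z = c * F' x y z := fun c x y z ↦ by
      simpa [hz₂] using hlin.2.1 c x y 0 z
    have hc₃ : ∀ (c : ℝ) x y z, F' x y (c • z) = c * F' x y z := fun c x y z ↦ by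
      simpa [hz₃] using hlin.2.2 c x y z 0
    have h00 := hPF (e2 i) (e2 0) (e2 0)
    have h01 := hPF (e2 i) (e2 0) (e2 1)
    have h11 := hPF (e2 i) (e2 1) (e2 1)
    simp only [hPe0, hPe1, hlin.2.1, hlin.2.2, hc₂, hc₃, hs] at h00 h01 h11
    refine exists_eq_mul_of_skew_reflection hab ?_ ?_ ?_ <;> linarith
  obtain ⟨m, hm00, hm01, hm11⟩ := hm 0
  obtain ⟨n, hn00, hn01, hn11⟩ := hm 1
  have hm10 := (hsym (e2 0) (e2 1) (e2 0)).trans hm01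
  have hn10 := (hsym (e2 1) (e2 1) (e2 0)).trans hn01
  have hθ : ∀ z, θ' z = m * (b * z 0 - a * z 1) - n * (a * z 0 + b * z 1) := by
    intro z
    rw [hθ' z, Fin.sum_univ_two, hlin.eq_sum (e2 0), hlin.eq_sum (e2 1)]
    simp only [Fin.sum_univ_two, hm00, hm01, hm10, hm11, hn00, hn01, hn10, hn11]
    simp [e2]
    ring
  intro x y z
  rw [hlin.eq_sum x y z]
  simp only [Fin.sum_univ_two, hm00, hm01, hm10, hm11, hn00, hn01, hn10, hn11, hθ's, hθ, hP0, hP1,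
    g2]
  grind
end
end

section
/- Let F : V×V×V → ℝ be an apapR-symmetric trilinear form. Set θ₀ = F₁₁₀ + F₂₂₀, θ₁ = F₁₁₁, θ₂ = F₂₂₂, θ*₀ = F₁₂₀ + F₂₁₀, λ = (F₁₁₀ − F₂₂₀)/2, μ = (F₁₂₀ − F₂₁₀)/2, ν = F₀₁₁, ω₁ = F₀₀₁, ω₂ = F₀₀₂. Then F = F¹ + F⁴ + F⁵ + F⁸ + F⁹ + F¹⁰ + F¹¹, where the seven summands are the basic-class forms with these parameters. (In particular a 3-dimensional apapR manifold can belong only to the classes F₁, F₄, F₅, F₈, F₉, F₁₀, F₁₁ and their direct sums.) -/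
noncomputable section

/-- `V = ℝ³` with standard basis and inner product. -/
abbrev V3 : Type := Fin 3 → ℝ

/-- The standard basis `e₀, e₁, e₂` of `V3`. -/
def e3 (i : Fin 3) : V3 := Pi.single i 1

/-- The standard inner product `g` on `V3`. -/
def g3 (x y : V3) : ℝ := ∑ i, x i * y i

/-- The paracontact endomorphism `φ`: `φe₀ = 0`, `φe₁ = e₂`, `φe₂ = e₁`. -/
def phi3 (x : V3) : V3 := ![0, x 2, x 1]

/-- A map `F : V×V×V → ℝ` is trilinear. -/
def IsTrilinear (F : V3 → V3 → V3 → ℝ) : Prop :=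
  (∀ (c : ℝ) (x x' y z : V3), F (c • x + x') y z = c * F x y z + F x' y z) ∧
  (∀ (c : ℝ) (x y y' z : V3), F x (c • y + y') z = c * F x y z + F x y' z) ∧
  (∀ (c : ℝ) (x y z z' : V3), F x y (c • z + z') = c * F x y z + F x y z')

/-- A trilinear form is apapR-symmetric if it has the symmetries of the fundamental
tensor of an almost paracontact almost paracomplex Riemannian manifold:
`F(x,y,z) = F(x,z,y)` and `F(x,y,z) = −F(x,φy,φz) + η(y)F(x,ξ,z) + η(z)F(x,y,ξ)`. -/
def IsApapRSymmetric (F : V3 → V3 → V3 → ℝ) : Prop :=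
  IsTrilinear F ∧
  (∀ x y z, F x y z = F x z y) ∧
  (∀ x y z, F x y z = - F x (phi3 y) (phi3 z) + y 0 * F x (e3 0) z + z 0 * F x y (e3 0))

/-- Every vector of `V3` is the combination of the standard basis given by its coordinates. -/
theorem V3.eq_combination (x : V3) :
    x = x 0 • e3 0 + (x 1 • e3 1 + (x 2 • e3 2 + 0)) := by
  ext i
  fin_cases i <;> simp [e3]

theorem phi3_e3_zero : phi3 (e3 0) = 0 := by
  ext i
  fin_cases i <;> simp [phi3, e3]

theorem phi3_e3_one : phi3 (e3 1) = e3 2 := by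
  ext i
  fin_cases i <;> simp [phi3, e3]

theorem phi3_e3_two : phi3 (e3 2) = e3 1 := by
  ext i
  fin_cases i <;> simp [phi3, e3]

/-- A map `V3 → ℝ` that is linear is determined by its values on the standard basis. -/
theorem V3.apply_eq_of_linear (f : V3 → ℝ)
    (hf : ∀ (c : ℝ) (x x' : V3), f (c • x + x') = c * f x + f x') (x : V3) :
    f x = x 0 * f (e3 0) + x 1 * f (e3 1) + x 2 * f (e3 2) := by
  have hf0 : f 0 = 0 := by simpa using hf 1 0 0
  conv_lhs => rw [V3.eq_combination x]
  rw [hf, hf, hf, hf0]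
  ring

namespace IsApapRSymmetric

variable {F : V3 → V3 → V3 → ℝ}

theorem apply_e3_zero_zero (hF : IsApapRSymmetric F) (x : V3) : F x (e3 0) (e3 0) = 0 := by
  obtain ⟨⟨-, hy, -⟩, -, hφ⟩ := hF
  have h := hφ x (e3 0) (e3 0)
  have h0 : F x 0 0 = 0 := by simpa using hy 1 x 0 0 0
  have he : e3 0 0 = 1 := by simp [e3]
  rw [phi3_e3_zero, h0, he] at h
  linarith

theorem apply_e3_one_two (hF : IsApapRSymmetric F) (x : V3) : F x (e3 1) (e3 2) = 0 := by
  obtain ⟨-, hs, hφ⟩ := hF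
  have h := hφ x (e3 1) (e3 2)
  have h1 : e3 1 0 = 0 := by simp [e3]
  have h2 : e3 2 0 = 0 := by simp [e3]
  rw [phi3_e3_one, phi3_e3_two, hs x (e3 2) (e3 1), h1, h2] at h
  linarith

theorem apply_e3_two_two (hF : IsApapRSymmetric F) (x : V3) :
    F x (e3 2) (e3 2) = -F x (e3 1) (e3 1) := by
  obtain ⟨-, -, hφ⟩ := hF
  have h := hφ x (e3 2) (e3 2)
  have h2 : e3 2 0 = 0 := by simp [e3]
  rw [phi3_e3_two, h2] at h
  linarith

/-- The last two arguments of an apapR-symmetric form expanded in the standard basis. -/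
theorem apply_eq (hF : IsApapRSymmetric F) (x y z : V3) :
    F x y z = (y 1 * z 1 - y 2 * z 2) * F x (e3 1) (e3 1)
      + (y 0 * z 1 + y 1 * z 0) * F x (e3 1) (e3 0)
      + (y 0 * z 2 + y 2 * z 0) * F x (e3 2) (e3 0) := by
  have hz (y : V3) := V3.apply_eq_of_linear (F x y) (fun c z z' => hF.1.2.2 c x y z z') z
  rw [V3.apply_eq_of_linear (fun y => F x y z) (fun c y y' => hF.1.2.1 c x y y' z) y,
    hz (e3 0), hz (e3 1), hz (e3 2), hF.2.1 x (e3 0) (e3 1), hF.2.1 x (e3 0) (e3 2),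
    hF.2.1 x (e3 2) (e3 1), hF.apply_e3_zero_zero, hF.apply_e3_one_two, hF.apply_e3_two_two]
  ring

end IsApapRSymmetric

/-- Every apapR-symmetric trilinear form on `ℝ³` decomposes as
`F = F¹ + F⁴ + F⁵ + F⁸ + F⁹ + F¹⁰ + F¹¹`, the sum of the basic-class forms with
parameters `θ₀, θ₁, θ₂, θ*₀, λ, μ, ν, ω₁, ω₂` computed from the components of `F`.
Hence a 3-dimensional apapR manifold can belong only to the classes
`F₁, F₄, F₅, F₈, F₉, F₁₀, F₁₁` and their direct sums. -/
theorem statement1 (F : V3 → V3 → V3 → ℝ) (hF : IsApapRSymmetric F)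
    (θ₀ θ₁ θ₂ θs₀ lam mu nu om₁ om₂ : ℝ)
    (hθ₀ : θ₀ = F (e3 1) (e3 1) (e3 0) + F (e3 2) (e3 2) (e3 0))
    (hθ₁ : θ₁ = F (e3 1) (e3 1) (e3 1))
    (hθ₂ : θ₂ = F (e3 2) (e3 2) (e3 2))
    (hθs₀ : θs₀ = F (e3 1) (e3 2) (e3 0) + F (e3 2) (e3 1) (e3 0))
    (hlam : lam = (F (e3 1) (e3 1) (e3 0) - F (e3 2) (e3 2) (e3 0)) / 2)
    (hmu : mu = (F (e3 1) (e3 2) (e3 0) - F (e3 2) (e3 1) (e3 0)) / 2)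
    (hnu : nu = F (e3 0) (e3 1) (e3 1))
    (hom₁ : om₁ = F (e3 0) (e3 0) (e3 1))
    (hom₂ : om₂ = F (e3 0) (e3 0) (e3 2)) :
    ∀ x y z, F x y z =
      (x 1 * θ₁ - x 2 * θ₂) * (y 1 * z 1 - y 2 * z 2)
      + θ₀ / 2 * (x 1 * (y 0 * z 1 + y 1 * z 0) + x 2 * (y 0 * z 2 + y 2 * z 0))
      + θs₀ / 2 * (x 1 * (y 0 * z 2 + y 2 * z 0) + x 2 * (y 0 * z 1 + y 1 * z 0))
      + lam * (x 1 * (y 0 * z 1 + y 1 * z 0) - x 2 * (y 0 * z 2 + y 2 * z 0))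
      + mu * (x 1 * (y 0 * z 2 + y 2 * z 0) - x 2 * (y 0 * z 1 + y 1 * z 0))
      + nu * (x 0 * (y 1 * z 1 - y 2 * z 2))
      + x 0 * (om₁ * (y 0 * z 1 + y 1 * z 0) + om₂ * (y 0 * z 2 + y 2 * z 0)) := by
  intro x y z
  have hx (y z : V3) := V3.apply_eq_of_linear (fun x => F x y z)
    (fun c x x' => hF.1.1 c x x' y z) x
  rw [hF.apply_eq x y z, hx (e3 1) (e3 1), hx (e3 1) (e3 0), hx (e3 2) (e3 0), hθ₀, hθ₁, hθ₂,
    hθs₀, hlam, hmu, hnu, hom₁, hom₂, hF.2.1 (e3 0) (e3 0) (e3 1),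
    hF.2.1 (e3 0) (e3 0) (e3 2), hF.apply_e3_two_two (e3 2)]
  ring
end
end

section
/- For reals k′ and t > 0, the cone curvature tensor R_C has the following properties: (1) the sectional curvatures of the ξ-sections vanish, k(e₀,e₁) = k(e₀,e₂) = 0, while k(e₁,e₂) = (k′−1)/t²; (2) it is *-scalar flat, τ* = 0; (3) τ = 2(k′−1)/t², so τ < 0 iff k′ < 1 and τ > 0 iff k′ > 1; (4) the nonzero Ricci-type components are ρ(e₁,e₁) = ρ(e₂,e₂) = (k′−1)/t² and ρ*(e₁,e₂) = ρ*(e₂,e₁) = −(k′−1)/t². -/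
noncomputable section

/-- The horizontal part `x̄ = x − η(x)ξ` of a vector. -/
def hpart (x : V3) : V3 := x - x 0 • e3 0

/-- The cone curvature tensor
`R_C(x,y,z,w) = ((k′−1)/t²)·[g(ȳ,z̄)g(x̄,w̄) − g(x̄,z̄)g(ȳ,w̄)]`. -/
def RC (k' t : ℝ) (x y z w : V3) : ℝ :=
  ((k' - 1) / t ^ 2) *
    (g3 (hpart y) (hpart z) * g3 (hpart x) (hpart w)
      - g3 (hpart x) (hpart z) * g3 (hpart y) (hpart w))

/-- The Ricci tensor of a curvature-like tensor. -/
def ricci (R : V3 → V3 → V3 → V3 → ℝ) (y z : V3) : ℝ := ∑ i, R (e3 i) y z (e3 i)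

/-- The associated Ricci tensor `ρ*`. -/
def ricciStar (R : V3 → V3 → V3 → V3 → ℝ) (y z : V3) : ℝ :=
  ∑ i, R (e3 i) y z (phi3 (e3 i))

/-- The scalar curvature `τ`. -/
def scal (R : V3 → V3 → V3 → V3 → ℝ) : ℝ := ∑ i, ricci R (e3 i) (e3 i)

/-- The associated scalar curvature `τ*`. -/
def scalStar (R : V3 → V3 → V3 → V3 → ℝ) : ℝ := ∑ i, ricciStar R (e3 i) (e3 i)

/-- The sectional curvature of the plane spanned by `x, y`. -/
def sect (R : V3 → V3 → V3 → V3 → ℝ) (x y : V3) : ℝ :=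
  R x y y x / (g3 x x * g3 y y - (g3 x y) ^ 2)

lemma g3_hpart (x y : V3) : g3 (hpart x) (hpart y) = x 1 * y 1 + x 2 * y 2 := by
  simp [g3, hpart, e3, Fin.sum_univ_three]

lemma ricci_RC (k' t : ℝ) (y z : V3) :
    ricci (RC k' t) y z = (k' - 1) / t ^ 2 * (y 1 * z 1 + y 2 * z 2) := by
  simp [ricci, RC, g3_hpart, e3, Fin.sum_univ_three]
  ring

lemma ricciStar_RC (k' t : ℝ) (y z : V3) :
    ricciStar (RC k' t) y z = -((k' - 1) / t ^ 2 * (y 1 * z 2 + y 2 * z 1)) := by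
  simp [ricciStar, RC, g3_hpart, phi3, e3, Fin.sum_univ_three]
  ring

lemma scal_RC (k' t : ℝ) : scal (RC k' t) = 2 * (k' - 1) / t ^ 2 := by
  simp [scal, ricci_RC, e3, Fin.sum_univ_three]
  ring

lemma scalStar_RC (k' t : ℝ) : scalStar (RC k' t) = 0 := by
  simp [scalStar, ricciStar_RC, e3, Fin.sum_univ_three]

/-- Curvature properties of the cone: (1) the `ξ`-sectional curvatures vanish while
`k(e₁,e₂) = (k′−1)/t²`; (2) it is `*`-scalar flat; (3) `τ = 2(k′−1)/t²`, so `τ < 0` iff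
`k′ < 1` and `τ > 0` iff `k′ > 1`; (4) the nonzero Ricci-type components are
`ρ₁₁ = ρ₂₂ = (k′−1)/t²` and `ρ*₁₂ = ρ*₂₁ = −(k′−1)/t²`. -/
theorem statement7 (k' t : ℝ) (ht : 0 < t) :
    (sect (RC k' t) (e3 0) (e3 1) = 0 ∧ sect (RC k' t) (e3 0) (e3 2) = 0 ∧
      sect (RC k' t) (e3 1) (e3 2) = (k' - 1) / t ^ 2) ∧
    scalStar (RC k' t) = 0 ∧
    (scal (RC k' t) = 2 * (k' - 1) / t ^ 2 ∧
      (scal (RC k' t) < 0 ↔ k' < 1) ∧ (0 < scal (RC k' t) ↔ 1 < k')) ∧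
    (ricci (RC k' t) (e3 1) (e3 1) = (k' - 1) / t ^ 2 ∧
      ricci (RC k' t) (e3 2) (e3 2) = (k' - 1) / t ^ 2 ∧
      ricciStar (RC k' t) (e3 1) (e3 2) = -((k' - 1) / t ^ 2) ∧
      ricciStar (RC k' t) (e3 2) (e3 1) = -((k' - 1) / t ^ 2) ∧
      ricci (RC k' t) (e3 0) (e3 0) = 0 ∧
      ricci (RC k' t) (e3 0) (e3 1) = 0 ∧ ricci (RC k' t) (e3 1) (e3 0) = 0 ∧
      ricci (RC k' t) (e3 0) (e3 2) = 0 ∧ ricci (RC k' t) (e3 2) (e3 0) = 0 ∧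
      ricci (RC k' t) (e3 1) (e3 2) = 0 ∧ ricci (RC k' t) (e3 2) (e3 1) = 0 ∧
      ricciStar (RC k' t) (e3 0) (e3 0) = 0 ∧
      ricciStar (RC k' t) (e3 0) (e3 1) = 0 ∧ ricciStar (RC k' t) (e3 1) (e3 0) = 0 ∧
      ricciStar (RC k' t) (e3 0) (e3 2) = 0 ∧ ricciStar (RC k' t) (e3 2) (e3 0) = 0 ∧
      ricciStar (RC k' t) (e3 1) (e3 1) = 0 ∧ ricciStar (RC k' t) (e3 2) (e3 2) = 0) := by
  have ht2 : 0 < t ^ 2 := by positivity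
  refine ⟨?_, scalStar_RC k' t, ⟨scal_RC k' t, ?_, ?_⟩, ?_⟩
  · simp [sect, RC, g3, hpart, e3, Fin.sum_univ_three]
  · rw [scal_RC, div_lt_iff₀ ht2]
    constructor <;> intro h <;> linarith
  · rw [scal_RC, lt_div_iff₀ ht2]
    constructor <;> intro h <;> linarith
  · simp [ricci_RC, ricciStar_RC, e3]
end
end

section
/- For reals a, b₁, b₂, the curvature-like tensor R_S has the following Ricci-type quantities: ρ(e₁,e₁) = ρ(e₂,e₂) = a − 1, ρ(e₀,e₀) = −2, ρ(e₁,e₂) = ρ(e₂,e₁) = 0, ρ(e₀,e₁) = ρ(e₁,e₀) = b₁, ρ(e₀,e₂) = ρ(e₂,e₀) = b₂; ρ*(e₀,e₀) = ρ*(e₁,e₁) = ρ*(e₂,e₂) = 0, ρ*(e₁,e₂) = ρ*(e₂,e₁) = −a, ρ*(e₀,e₁) = ρ*(e₁,e₀) = −b₂, ρ*(e₀,e₂) = ρ*(e₂,e₀) = −b₁; and τ = 2a − 4, τ* = 0. -/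
noncomputable section

/-- A map `R : V⁴ → ℝ` is 4-linear. -/
def IsQuadrilinear (R : V3 → V3 → V3 → V3 → ℝ) : Prop :=
  (∀ (c : ℝ) (x x' y z w : V3), R (c • x + x') y z w = c * R x y z w + R x' y z w) ∧
  (∀ (c : ℝ) (x y y' z w : V3), R x (c • y + y') z w = c * R x y z w + R x y' z w) ∧
  (∀ (c : ℝ) (x y z z' w : V3), R x y (c • z + z') w = c * R x y z w + R x y z' w) ∧
  (∀ (c : ℝ) (x y z w w' : V3), R x y z (c • w + w') = c * R x y z w + R x y z w')

/-- A curvature-like tensor: 4-linear with the standard curvature symmetries. -/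
def CurvatureLike (R : V3 → V3 → V3 → V3 → ℝ) : Prop :=
  IsQuadrilinear R ∧
  (∀ x y z w, R x y z w = - R y x z w) ∧
  (∀ x y z w, R x y z w = - R x y w z) ∧
  (∀ x y z w, R x y z w = R z w x y)

namespace CurvatureLike

variable {R : V3 → V3 → V3 → V3 → ℝ}

theorem apply_zero_right (hR : CurvatureLike R) (x y z : V3) : R x y z 0 = 0 := by
  have h := hR.1.2.2.2 1 x y z 0 0
  simp only [smul_zero, add_zero] at h
  linarith

theorem apply_self_left (hR : CurvatureLike R) (x z w : V3) : R x x z w = 0 := by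
  linarith [hR.2.1 x x z w]

theorem apply_self_right (hR : CurvatureLike R) (x y z : V3) : R x y z z = 0 := by
  linarith [hR.2.2.1 x y z z]

end CurvatureLike

/-- Ricci-type quantities of the curvature tensor `R_S` of the hyperbolic extension:
the hypotheses say that `R` is curvature-like with components
`R(e₁,e₂,e₂,e₁) = a`, `R(e₁,e₂,e₁,e₀) = −b₂`, `R(e₁,e₂,e₂,e₀) = b₁`,
`R(e₀,e₁,e₁,e₀) = R(e₀,e₂,e₂,e₀) = −1`, all components not determined from these by the
curvature symmetries vanishing (`R(e₀,e₁,e₀,e₂) = 0` is the only remaining one). -/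
theorem statement11 (a b₁ b₂ : ℝ) (R : V3 → V3 → V3 → V3 → ℝ)
    (hR : CurvatureLike R)
    (h1 : R (e3 1) (e3 2) (e3 2) (e3 1) = a)
    (h2 : R (e3 1) (e3 2) (e3 1) (e3 0) = -b₂)
    (h3 : R (e3 1) (e3 2) (e3 2) (e3 0) = b₁)
    (h4 : R (e3 0) (e3 1) (e3 1) (e3 0) = -1)
    (h5 : R (e3 0) (e3 2) (e3 2) (e3 0) = -1)
    (h6 : R (e3 0) (e3 1) (e3 0) (e3 2) = 0)
    (ρ ρs : V3 → V3 → ℝ) (τ τs : ℝ)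
    (hρ : ∀ y z, ρ y z = ∑ i, R (e3 i) y z (e3 i))
    (hρs : ∀ y z, ρs y z = ∑ i, R (e3 i) y z (phi3 (e3 i)))
    (hτ : τ = ∑ i, ρ (e3 i) (e3 i))
    (hτs : τs = ∑ i, ρs (e3 i) (e3 i)) :
    (ρ (e3 1) (e3 1) = a - 1 ∧ ρ (e3 2) (e3 2) = a - 1 ∧ ρ (e3 0) (e3 0) = -2 ∧
      ρ (e3 1) (e3 2) = 0 ∧ ρ (e3 2) (e3 1) = 0 ∧
      ρ (e3 0) (e3 1) = b₁ ∧ ρ (e3 1) (e3 0) = b₁ ∧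
      ρ (e3 0) (e3 2) = b₂ ∧ ρ (e3 2) (e3 0) = b₂) ∧
    (ρs (e3 0) (e3 0) = 0 ∧ ρs (e3 1) (e3 1) = 0 ∧ ρs (e3 2) (e3 2) = 0 ∧
      ρs (e3 1) (e3 2) = -a ∧ ρs (e3 2) (e3 1) = -a ∧
      ρs (e3 0) (e3 1) = -b₂ ∧ ρs (e3 1) (e3 0) = -b₂ ∧
      ρs (e3 0) (e3 2) = -b₁ ∧ ρs (e3 2) (e3 0) = -b₁) ∧
    τ = 2 * a - 4 ∧ τs = 0 := by
  have swap_left := hR.2.1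
  have swap_right := hR.2.2.1
  have swap_pairs := hR.2.2.2
  -- Orient every component along the planes `(e₀,e₁)`, `(e₀,e₂)`, `(e₁,e₂)`.
  have left₁₀ := swap_left (e3 1) (e3 0)
  have left₂₀ := swap_left (e3 2) (e3 0)
  have left₂₁ := swap_left (e3 2) (e3 1)
  have right₁₀ := fun x y => swap_right x y (e3 1) (e3 0)
  have right₂₀ := fun x y => swap_right x y (e3 2) (e3 0)
  have right₂₁ := fun x y => swap_right x y (e3 2) (e3 1)
  have pairs₀₂₀₁ := swap_pairs (e3 0) (e3 2) (e3 0) (e3 1)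
  have pairs₀₁₁₂ := swap_pairs (e3 0) (e3 1) (e3 1) (e3 2)
  have pairs₀₂₁₂ := swap_pairs (e3 0) (e3 2) (e3 1) (e3 2)
  rw [right₂₁] at h1
  rw [right₁₀] at h2 h4
  rw [right₂₀] at h3 h5
  simp only [hτ, hτs, hρ, hρs, Fin.sum_univ_three, phi3_e3_zero, phi3_e3_one, phi3_e3_two,
    hR.apply_zero_right, hR.apply_self_left, hR.apply_self_right,
    left₁₀, left₂₀, left₂₁, right₁₀, right₂₀, right₂₁,
    pairs₀₂₀₁, pairs₀₁₁₂, pairs₀₂₁₂]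
  refine ⟨⟨?_, ?_, ?_, ?_, ?_, ?_, ?_, ?_, ?_⟩, ⟨?_, ?_, ?_, ?_, ?_, ?_, ?_, ?_, ?_⟩, ?_, ?_⟩ <;>
    linarith
end
end
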